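/- arXiv:1901.07248 — 2 statements merged into one kernel-verified Lean document; each statement's English description precedes it below -/
import Mathlib

section
/- Let G be a finite tree and A any vertex of G. Then for every strategy f there exist two distinct colors c₁, c₂ ∈ Fin 3 and two hat placements, each disproving for f, such that the first placement assigns color c₁ to A and the second placement assigns color c₂ to A. -/
/-!
The proof is by induction on the number of vertices, deleting a leaf `v ≠ A` with neighbour `u`.

If `u` wears color `a`, then the sage at `v` guesses wrongly exactly when `v` wears one of the two
colors different from his guess `p a`. On `G - v`, let the sage at `u` guess `a` when, in view of
his remaining neighbours, the original strategy makes him guess `a` for both of these colors at `v`.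
At most one `a` has this property, because two pairs of colors out of three always meet, so this
defines a strategy on `G - v`. If a placement disproves it and gives `u` the color `a`, then some
color of `v` other than `p a` makes the sage at `u` wrong as well, so the placement extends to `G`
without changing the color of `A`. Hence both placements found on `G - v` extend to `G`.
-/

/-- A strategy in the "Hats" game: each sage `v` maps a coloring of his
neighbourhood to a guess in `Fin 3`. -/
def HatStrategy {V : Type*} (G : SimpleGraph V) : Type _ :=
  ∀ v : V, (G.neighborSet v → Fin 3) → Fin 3

/-- The sage at `v` guesses his own hat color correctly for placement `c`. -/
def GuessesRight {V : Type*} {G : SimpleGraph V} (f : HatStrategy G)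
    (c : V → Fin 3) (v : V) : Prop :=
  f v (fun u => c u.1) = c v

/-- The sages win the "Hats" game on `G`. -/
def SagesWin {V : Type*} (G : SimpleGraph V) : Prop :=
  ∃ f : HatStrategy G, ∀ c : V → Fin 3, ∃ v : V, GuessesRight f c v

/-- A hat placement is disproving for a strategy if no sage guesses correctly. -/
def Disproving {V : Type*} {G : SimpleGraph V} (f : HatStrategy G)
    (c : V → Fin 3) : Prop :=
  ∀ v : V, ¬ GuessesRight f c v

/-- The coloring of the `G`-neighbourhood of `w` obtained from a coloring `g` of its neighbourhood
in `G - v` by giving `v` the color `x`; the value `x` is not used if `v` is not adjacent to `w`. -/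
noncomputable def extendNbhd {V : Type*} {G : SimpleGraph V} {v : V} {w : ({v}ᶜ : Set V)}
    (g : (G.induce ({v}ᶜ : Set V)).neighborSet w → Fin 3) (x : Fin 3) :
    G.neighborSet w.1 → Fin 3 := by
  classical
  exact fun y => if h : y.1 = v then x else g ⟨⟨y.1, h⟩, y.2⟩

open Classical in
/-- The strategy induced on `G - v` when the sage at `v` would guess `p a` for a neighbour of
color `a`: a sage guesses the color `a` for which the strategy `f` makes him guess `a` whatever
color other than `p a` is given to `v`. Such an `a` is unique if it exists; otherwise the guess
is `0`. The same formula serves sages not adjacent to `v`, whose guesses it leaves unchanged. -/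
noncomputable def deleteLeafStrategy {V : Type*} {G : SimpleGraph V} (f : HatStrategy G) (v : V)
    (p : Fin 3 → Fin 3) : HatStrategy (G.induce ({v}ᶜ : Set V)) :=
  fun w g =>
    if h : ∃ a, ∀ x, x ≠ p a → f w.1 (extendNbhd g x) = a then h.choose else 0

/-- The guess of `deleteLeafStrategy` is the only color forced on a sage by `f`. -/
lemma deleteLeafStrategy_eq {V : Type*} {G : SimpleGraph V} (f : HatStrategy G) (v : V)
    (p : Fin 3 → Fin 3) (w : ({v}ᶜ : Set V))
    (g : (G.induce ({v}ᶜ : Set V)).neighborSet w → Fin 3) (a : Fin 3)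
    (ha : ∀ x, x ≠ p a → f w.1 (extendNbhd g x) = a) :
    deleteLeafStrategy f v p w g = a := by
  have h : ∃ a, ∀ x, x ≠ p a → f w.1 (extendNbhd g x) = a := ⟨a, ha⟩
  have hdef : deleteLeafStrategy f v p w g = h.choose := dif_pos h
  -- Two colors cannot exhaust `Fin 3`, so some color of `v` is admissible for both guesses.
  have key : ∀ q r : Fin 3, ∃ x, x ≠ q ∧ x ≠ r := by decide
  obtain ⟨x, hx, hx'⟩ := key (p a) (p h.choose)
  rw [hdef, ← h.choose_spec x hx', ha x hx]

lemma exists_disproving_extension {V : Type*} {G : SimpleGraph V} (f : HatStrategy G) {u v : V}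
    (huv : G.Adj v u) (hu : ∀ w, G.Adj v w → w = u) (d : ({v}ᶜ : Set V) → Fin 3)
    (hd : Disproving (deleteLeafStrategy f v fun a => f v fun _ => a) d) :
    ∃ e : V → Fin 3, Disproving f e ∧ ∀ w : ({v}ᶜ : Set V), e w = d w := by
  classical
  have wrong : ∀ w : ({v}ᶜ : Set V), ∃ x, x ≠ f v (fun _ => d w) ∧
      f w.1 (extendNbhd (v := v) (w := w) (fun y => d y.1) x) ≠ d w := by
    intro w
    by_contra! h
    exact hd w (deleteLeafStrategy_eq f v _ w _ _ h)
  obtain ⟨x, hxv, hxu⟩ := wrong ⟨u, huv.ne'⟩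
  let e : V → Fin 3 := fun y => if h : y = v then x else d ⟨y, h⟩
  have he : ∀ w : ({v}ᶜ : Set V), e w = d w := fun w => dif_neg w.2
  have hev : e v = x := dif_pos rfl
  refine ⟨e, fun w hw => ?_, he⟩
  unfold GuessesRight at hw
  by_cases hwv : w = v
  · subst hwv
    have : (fun y : G.neighborSet w => e y.1) = fun _ => d ⟨u, huv.ne'⟩ := by
      funext y
      rw [hu y.1 y.2]
      exact he ⟨u, huv.ne'⟩
    rw [this, hev] at hw
    exact hxv hw.symm
  · have hew : e w = d ⟨w, hwv⟩ := dif_neg hwv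
    by_cases hwu : w = u
    · subst hwu
      exact hxu (hw.trans hew)
    · obtain ⟨x', -, hx'⟩ := wrong ⟨w, hwv⟩
      refine hx' (Eq.trans (congrArg (f w) ?_) (hw.trans hew))
      funext y
      -- As `w ≠ u` is not adjacent to the leaf `v`, the two colors `x` and `x'` play no role.
      have hyv : y.1 ≠ v := fun h => hwu (hu w (h ▸ y.2.symm))
      simp only [extendNbhd, e, dif_neg hyv]

theorem two_colors_in_tree {V : Type*} [Fintype V] (G : SimpleGraph V)
    (hG : G.IsTree) (A : V) (f : HatStrategy G) :
    ∃ c₁ c₂ : Fin 3, c₁ ≠ c₂ ∧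
      ∃ d₁ d₂ : V → Fin 3, Disproving f d₁ ∧ Disproving f d₂ ∧
        d₁ A = c₁ ∧ d₂ A = c₂ := by
  classical
  induction hn : Fintype.card V generalizing V with
  | zero => exact absurd hn (Fintype.card_pos_iff.2 ⟨A⟩).ne'
  | succ n ih =>
    rcases subsingleton_or_nontrivial V with hV | hV
    · have two : ∀ q : Fin 3, ∃ c₁ c₂ : Fin 3, c₁ ≠ c₂ ∧ q ≠ c₁ ∧ q ≠ c₂ := by decide
      -- The guess of the only sage does not depend on the placement, as he has no neighbours.
      have const : ∀ c d : V → Fin 3, f A (fun y => c y.1) = f A (fun y => d y.1) := by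
        intro c d
        congr 1
        funext y
        exact absurd (Subsingleton.elim _ _) (G.ne_of_adj y.2)
      obtain ⟨c₁, c₂, h, h₁, h₂⟩ := two (f A fun _ => 0)
      refine ⟨c₁, c₂, h, fun _ => c₁, fun _ => c₂, ?_, ?_, rfl, rfl⟩
      · intro w hw
        obtain rfl := Subsingleton.elim A w
        exact h₁ ((const (fun _ => 0) (fun _ => c₁)).trans hw)
      · intro w hw
        obtain rfl := Subsingleton.elim A w
        exact h₂ ((const (fun _ => 0) (fun _ => c₂)).trans hw)
    · obtain ⟨v, hvA, hdeg⟩ : ∃ v, v ≠ A ∧ G.degree v = 1 := by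
        obtain ⟨v, w, hvw, hv, hw⟩ := hG.exists_ne_and_degree_eq_one
        by_cases h : v = A
        · exact ⟨w, fun hwA => hvw (h.trans hwA.symm), hw⟩
        · exact ⟨v, h, hv⟩
      obtain ⟨u, huv, hu⟩ := SimpleGraph.degree_eq_one_iff_existsUnique_adj.1 hdeg
      have hT : (G.induce ({v}ᶜ : Set V)).IsTree :=
        ⟨hG.connected.induce_compl_singleton_of_degree_eq_one hdeg, hG.isAcyclic.induce _⟩
      have hcard : Fintype.card ({v}ᶜ : Set V) = n := by
        rw [Fintype.card_compl_set, hn]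
        simp
      obtain ⟨c₁, c₂, h, d₁, d₂, h₁, h₂, e₁, e₂⟩ :=
        ih _ hT ⟨A, hvA.symm⟩ (deleteLeafStrategy f v fun a => f v fun _ => a) hcard
      obtain ⟨d₁', h₁', e₁'⟩ := exists_disproving_extension f huv hu d₁ h₁
      obtain ⟨d₂', h₂', e₂'⟩ := exists_disproving_extension f huv hu d₂ h₂
      exact ⟨c₁, c₂, h, d₁', d₂', h₁', h₂', (e₁' _).trans e₁, (e₂' _).trans e₂⟩
end

section
/- For every n ≥ 2, on the path graph P_n with endpoint vertices A and B, the sages win with the hint A=B. -/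
/-- The sages win on `G` with the hint that `A` and `B` have the same hat color. -/
def SagesWinEq {V : Type*} (G : SimpleGraph V) (A B : V) : Prop :=
  ∃ f : HatStrategy G, ∀ c : V → Fin 3, c A = c B → ∃ v : V, GuessesRight f c v

/-- What the colors `p`, `q` of sages `i` and `i + 1`, for `1 ≤ i ≤ n - 2`, must satisfy when sage
`0` has color `a` and the sages `0, …, i` are all wrong. -/
def Consistent (a p q : Fin 3) : Prop :=
  a ≠ 0 ∧ (a = 1 → p = if q = 2 then 1 else 0) ∧ (a = 2 → p ≠ if q = 2 then 0 else 1)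

/-- The guess of sage `i` on the path with `n ≥ 3` vertices, when he sees the color `p` on sage
`i - 1` and `q` on sage `i + 1`. The value of `p` is irrelevant for `i = 0`, and that of `q` for
`i = n - 1`. -/
def rule (n i : ℕ) (p q : Fin 3) : Fin 3 :=
  if i = 0 then (if q = 2 then 1 else 0)
  else if i = n - 1 then (if p = 0 then 1 else 2)
  else if p = (if i = 1 then 0 else 1) then 2
  else if q = 2 then 0 else 1

theorem consistent_first : ∀ a p q : Fin 3, (if p = 2 then 1 else 0) ≠ a →
    (if a = 0 then 2 else if q = 2 then 0 else 1) ≠ p → Consistent a p q := by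
  unfold Consistent; decide

theorem consistent_step : ∀ a p q r : Fin 3, Consistent a p q →
    (if p = 1 then 2 else if r = 2 then 0 else 1) ≠ q → Consistent a q r := by
  unfold Consistent; decide

theorem consistent_last : ∀ a p : Fin 3, Consistent a p a → (if p = 0 then 1 else 2) = a := by
  unfold Consistent; decide

/-- The strategy `rule` never fails on color sequences with equal ends. -/
theorem rule_wins (n : ℕ) (hn : 3 ≤ n) (x : ℕ → Fin 3) (hx : x 0 = x (n - 1)) :
    ∃ i < n, rule n i (x (i - 1)) (x (i + 1)) = x i := by
  by_contra! h
  have key : ∀ i, i + 3 ≤ n → Consistent (x 0) (x (i + 1)) (x (i + 2)) := by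
    intro i
    induction i with
    | zero =>
      intro _
      have h0 := h 0 (by omega)
      have h1 := h 1 (by omega)
      have e : 1 ≠ n - 1 := by omega
      simp only [rule, e, one_ne_zero, if_true, if_false] at h0 h1
      exact consistent_first _ _ _ h0 h1
    | succ i ih =>
      intro hi
      have h1 := h (i + 2) (by omega)
      have e0 : i + 2 ≠ 0 := by omega
      have e1 : i + 2 ≠ 1 := by omega
      have e2 : i + 2 ≠ n - 1 := by omega
      simp only [rule, e0, e1, e2, if_false] at h1
      exact consistent_step _ _ _ _ (ih (by omega)) h1
  obtain ⟨m, rfl⟩ : ∃ m, n = m + 3 := ⟨n - 3, by omega⟩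
  have hl := h (m + 2) (by omega)
  have e0 : m + 2 ≠ 0 := by omega
  have e1 : m + 2 = m + 3 - 1 := by omega
  simp only [rule, e0, if_false, if_pos e1] at hl
  have hk := key m le_rfl
  rw [show m + 3 - 1 = m + 2 by omega] at hx
  rw [← hx] at hk hl
  exact hl (consistent_last _ _ hk)

/-- The color that sage `v` sees on sage `j`, with the default `0` if `j` is not a neighbor. -/
noncomputable def seen {n : ℕ} (v : Fin n)
    (φ : (SimpleGraph.pathGraph n).neighborSet v → Fin 3) (j : ℕ) : Fin 3 :=
  open Classical in
  if h : ∃ hj : j < n, (⟨j, hj⟩ : Fin n) ∈ (SimpleGraph.pathGraph n).neighborSet v then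
    φ ⟨⟨j, h.1⟩, h.2⟩
  else 0

theorem seen_eq {n : ℕ} (c : Fin n → Fin 3) (v : Fin n) (j : ℕ) (hj : j < n)
    (h : v.val + 1 = j ∨ j + 1 = v.val) :
    seen v (fun u => c u.1) j = c ⟨j, hj⟩ := by
  have : ∃ hj : j < n, (⟨j, hj⟩ : Fin n) ∈ (SimpleGraph.pathGraph n).neighborSet v :=
    ⟨hj, by simpa [SimpleGraph.pathGraph_adj] using h⟩
  rw [seen, dif_pos this]

theorem path_win_with_eq_hint (n : ℕ) (hn : 2 ≤ n) :
    SagesWinEq (SimpleGraph.pathGraph n) ⟨0, by omega⟩ ⟨n - 1, by omega⟩ := by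
  obtain rfl | h3 : n = 2 ∨ 3 ≤ n := by omega
  · refine ⟨fun v φ => seen v φ (v.val + 1), fun c hc => ⟨0, ?_⟩⟩
    exact (seen_eq c 0 1 (by omega) (by simp)).trans hc.symm
  · refine ⟨fun v φ => rule n v.val (seen v φ (v.val - 1)) (seen v φ (v.val + 1)), fun c hc => ?_⟩
    let x : ℕ → Fin 3 := fun i => if h : i < n then c ⟨i, h⟩ else 0
    have hxc : ∀ i (h : i < n), x i = c ⟨i, h⟩ := fun i h => dif_pos h
    obtain ⟨i, hi, hr⟩ := rule_wins n h3 x (by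
      rw [hxc 0 (by omega), hxc (n - 1) (by omega)]; exact hc)
    refine ⟨⟨i, hi⟩, ?_⟩
    rw [hxc i hi] at hr
    change rule n i (seen ⟨i, hi⟩ (fun u => c u.1) (i - 1))
      (seen ⟨i, hi⟩ (fun u => c u.1) (i + 1)) = c ⟨i, hi⟩
    rw [← hr]
    have hleft : i ≠ 0 → seen ⟨i, hi⟩ (fun u => c u.1) (i - 1) = x (i - 1) := fun h0 => by
      rw [hxc _ (by omega)]
      exact seen_eq c ⟨i, hi⟩ (i - 1) (by omega) (Or.inr (by simp only; omega))
    have hright : i ≠ n - 1 → seen ⟨i, hi⟩ (fun u => c u.1) (i + 1) = x (i + 1) := fun h1 => by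
      rw [hxc _ (by omega)]
      exact seen_eq c ⟨i, hi⟩ (i + 1) (by omega) (Or.inl rfl)
    -- At each end of the path, `rule` ignores the missing neighbor.
    by_cases h0 : i = 0
    · have h1 : i ≠ n - 1 := by omega
      simp only [rule, h0, if_true]
      subst h0
      rw [hright h1]
    · by_cases h1 : i = n - 1
      · simp only [rule, h0, if_pos h1, if_false]
        rw [hleft h0]
      · simp only [hleft h0, hright h1]
end
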